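/- Let S be a finite set and let X = (X_0, X_1, …, X_d) be an S-valued random vector with entropies satisfying: h(X) ≤ h(X_0, X_1, …, X_{d-1}) + b for some b ≥ 0, and suppose the 'star-edge' entropy inequality h(X) ≥ (d/2)·h(X_0, X_1) holds, where all pairs (X_0, X_i) have the same joint distribution (exchangeability of the leaves given the root). Then the total correlation of (X_0, X_1, …, X_{d-1}), defined as t = ∑_{i=0}^{d-1} h(X_i) - h(X_0,…,X_{d-1}), satisfies t ≤ b·(2d-2)/(d-2), assuming additionally that all X_i have the same marginal distribution and d ≥ 3. -/

import Mathlib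

open Finset
open scoped Classical

/-- Shannon entropy (natural logarithm) of a distribution on a finite type. -/
noncomputable def ent {β : Type} [Fintype β] (p : β → ℝ) : ℝ :=
  -∑ b, p b * Real.log (p b)

/-- Pushforward (distribution of the statistic `g`) of a distribution `μ`. -/
noncomputable def push {Ω β : Type} [Fintype Ω] (μ : Ω → ℝ) (g : Ω → β) : β → ℝ :=
  fun b => ∑ x ∈ Finset.univ.filter (fun x => g x = b), μ x

/-!
With fixed edge marginals, entropy is largest when the leaves are conditionally independent given
the root `X₀`, so `h(X₀, …, X_{d-1}) ≤ (d - 1) h(X₀, X₁) - (d - 2) h(X₀)`; this is submodularity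
of entropy, applied one leaf at a time. The star-edge inequality bounds the edge entropy by the
joint entropy, `(d / 2) h(X₀, X₁) ≤ h(X₀, …, X_{d-1}) + b`. Eliminating `h(X₀, X₁)` leaves
`(d - 2) (d h(X₀) - h(X₀, …, X_{d-1})) ≤ 2 (d - 1) b`.
-/

section Pushforward

variable {Ω β γ : Type} [Fintype Ω]

theorem push_nonneg {μ : Ω → ℝ} (hμ : ∀ x, 0 ≤ μ x) (g : Ω → β) (b : β) : 0 ≤ push μ g b :=
  sum_nonneg fun x _ => hμ x

theorem le_push_apply {μ : Ω → ℝ} (hμ : ∀ x, 0 ≤ μ x) (g : Ω → β) (x : Ω) :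
    μ x ≤ push μ g (g x) :=
  single_le_sum (f := μ) (fun y _ => hμ y) (by simp)

theorem sum_push_mul [Fintype β] (μ : Ω → ℝ) (g : Ω → β) (f : β → ℝ) :
    ∑ b, push μ g b * f b = ∑ x, μ x * f (g x) := by
  rw [← sum_fiberwise (s := univ) (g := g)]
  refine sum_congr rfl fun b _ => ?_
  rw [push, sum_mul]
  exact sum_congr rfl fun x hx => by rw [(mem_filter.mp hx).2]

theorem sum_push [Fintype β] (μ : Ω → ℝ) (g : Ω → β) : ∑ b, push μ g b = ∑ x, μ x := by
  simpa using sum_push_mul μ g fun _ => 1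

theorem push_push [Fintype β] (μ : Ω → ℝ) (g : Ω → β) (k : β → γ) :
    push (push μ g) k = push μ fun x => k (g x) := by
  funext c
  simpa [push, sum_filter] using sum_push_mul μ g fun b => if k b = c then 1 else 0

theorem sum_push_prodMk [Fintype γ] (μ : Ω → ℝ) (g : Ω → β) (k : Ω → γ) (b : β) :
    ∑ c, push μ (fun x => (g x, k x)) (b, c) = push μ g b := by
  rw [push, ← sum_fiberwise (g := k)]
  simp only [push, filter_filter, Prod.mk.injEq]

theorem ent_push [Fintype β] (μ : Ω → ℝ) (g : Ω → β) :
    ent (push μ g) = -∑ x, μ x * Real.log (push μ g (g x)) := by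
  rw [ent, sum_push_mul μ g fun b => Real.log (push μ g b)]

-- Entropy only sees the partition of `Ω` into fibres, so the values can be re-encoded at will.
theorem ent_push_congr [Fintype β] [Fintype γ] (μ : Ω → ℝ) {g : Ω → β} {k : Ω → γ}
    (hgk : ∀ x y, g x = g y ↔ k x = k y) : ent (push μ g) = ent (push μ k) := by
  simp only [ent_push, push, hgk]

end Pushforward

section Submodularity

theorem ent_le_neg_sum_mul_log {Ω : Type} [Fintype Ω] {p q : Ω → ℝ} (hp : ∀ x, 0 ≤ p x)
    (hq : ∀ x, 0 ≤ q x) (hpq : ∀ x, 0 < p x → 0 < q x) (hsum : ∑ x, q x ≤ ∑ x, p x) :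
    ent p ≤ -∑ x, p x * Real.log (q x) := by
  have hterm : ∀ x, p x * Real.log (q x) - p x * Real.log (p x) ≤ q x - p x := by
    intro x
    rcases (hp x).eq_or_lt with hzero | hpos
    · simpa [← hzero] using hq x
    · calc p x * Real.log (q x) - p x * Real.log (p x)
          = p x * Real.log (q x / p x) := by
            rw [Real.log_div (hpq x hpos).ne' hpos.ne', mul_sub]
        _ ≤ p x * (q x / p x - 1) :=
            mul_le_mul_of_nonneg_left
              (Real.log_le_sub_one_of_pos (div_pos (hpq x hpos) hpos)) hpos.le
        _ = q x - p x := by field_simp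
  have htotal := sum_le_sum fun x (_ : x ∈ univ) => hterm x
  rw [sum_sub_distrib, sum_sub_distrib] at htotal
  rw [ent]
  linarith

variable {α β γ : Type} [Fintype α] [Fintype β] [Fintype γ]

/-- The weights on triples `(a, b, c)` with the same `(a, b)`- and `(a, c)`-marginals as `p` for
which `b` and `c` are conditionally independent given `a`. Where the `a`-marginal vanishes, so do
the numerators, and the junk value `0 / 0 = 0` is the right one. -/
noncomputable def condIndep (p : α × β × γ → ℝ) (z : α × β × γ) : ℝ :=
  push p (fun z => (z.1, z.2.1)) (z.1, z.2.1) * push p (fun z => (z.1, z.2.2)) (z.1, z.2.2) /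
    push p Prod.fst z.1

theorem sum_condIndep (p : α × β × γ → ℝ) : ∑ z, condIndep p z = ∑ z, p z :=
  calc ∑ z, condIndep p z
      = ∑ a, (∑ b, push p (fun z => (z.1, z.2.1)) (a, b)) *
          (∑ c, push p (fun z => (z.1, z.2.2)) (a, c)) / push p Prod.fst a := by
        simp only [Fintype.sum_prod_type, condIndep, sum_mul_sum, sum_div]
    _ = ∑ a, push p Prod.fst a * push p Prod.fst a / push p Prod.fst a := by
        simp only [sum_push_prodMk p (fun z => z.1)]
    _ = ∑ z, p z := by simp only [mul_self_div_self, sum_push]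

theorem mul_log_condIndep {p : α × β × γ → ℝ} (hp : ∀ z, 0 ≤ p z) (z : α × β × γ) :
    p z * Real.log (condIndep p z) =
      p z * Real.log (push p (fun z => (z.1, z.2.1)) (z.1, z.2.1)) +
        p z * Real.log (push p (fun z => (z.1, z.2.2)) (z.1, z.2.2)) -
          p z * Real.log (push p Prod.fst z.1) := by
  rcases (hp z).eq_or_lt with hzero | hpos
  · simp [← hzero]
  · have hab := hpos.trans_le (le_push_apply hp (fun z => (z.1, z.2.1)) z)
    have hac := hpos.trans_le (le_push_apply hp (fun z => (z.1, z.2.2)) z)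
    have ha := hpos.trans_le (le_push_apply hp Prod.fst z)
    rw [condIndep, Real.log_div (mul_pos hab hac).ne' ha.ne', Real.log_mul hab.ne' hac.ne',
      mul_sub, mul_add]

theorem ent_add_ent_push_fst_le {p : α × β × γ → ℝ} (hp : ∀ z, 0 ≤ p z) :
    ent p + ent (push p Prod.fst) ≤
      ent (push p fun z => (z.1, z.2.1)) + ent (push p fun z => (z.1, z.2.2)) := by
  have hgibbs : ent p ≤ -∑ z, p z * Real.log (condIndep p z) :=
    ent_le_neg_sum_mul_log hp
      (fun z => div_nonneg (mul_nonneg (push_nonneg hp _ _) (push_nonneg hp _ _))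
        (push_nonneg hp _ _))
      (fun z hz => div_pos
        (mul_pos (hz.trans_le (le_push_apply hp (fun z => (z.1, z.2.1)) z))
          (hz.trans_le (le_push_apply hp (fun z => (z.1, z.2.2)) z)))
        (hz.trans_le (le_push_apply hp Prod.fst z)))
      (sum_condIndep p).le
  simp only [mul_log_condIndep hp, sum_sub_distrib, sum_add_distrib] at hgibbs
  simp only [ent_push]
  linarith

theorem ent_push_submodular {Ω : Type} [Fintype Ω] {μ : Ω → ℝ} (hμ : ∀ x, 0 ≤ μ x)
    (A : Ω → α) (B : Ω → β) (C : Ω → γ) :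
    ent (push μ fun x => (A x, B x, C x)) + ent (push μ A) ≤
      ent (push μ fun x => (A x, B x)) + ent (push μ fun x => (A x, C x)) := by
  simpa only [push_push] using
    ent_add_ent_push_fst_le (push_nonneg hμ fun x => (A x, B x, C x))

end Submodularity

section TotalCorrelation

variable {Ω ι : Type} [Fintype Ω] [DecidableEq ι] {S : ι → Type} [∀ i, Fintype (S i)] {μ : Ω → ℝ}

theorem ent_push_prodMk_le_sum {α : Type} [Fintype α] (hμ : ∀ x, 0 ≤ μ x) (R : Ω → α)
    (Y : ∀ i, Ω → S i) (s : Finset ι) :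
    ent (push μ fun x => (R x, fun i : s => Y i x)) ≤
      ∑ i ∈ s, ent (push μ fun x => (R x, Y i x)) - ((#s : ℝ) - 1) * ent (push μ R) := by
  induction s using Finset.induction_on with
  | empty =>
    have hroot : ent (push μ fun x => (R x, fun i : (∅ : Finset ι) => Y i x)) = ent (push μ R) :=
      ent_push_congr μ fun x y => by simp [funext_iff]
    simp [hroot]
  | insert a s ha ih =>
    have hsplit : ent (push μ fun x => (R x, fun i : (insert a s : Finset ι) => Y i x)) =
        ent (push μ fun x => (R x, (fun i : s => Y i x), Y a x)) :=
      ent_push_congr μ fun x y => by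
        simp only [Prod.mk.injEq, funext_iff, Subtype.forall, forall_mem_insert]
        tauto
    have hsub := ent_push_submodular hμ R (fun x (i : s) => Y i x) (Y a)
    rw [hsplit, sum_insert ha, card_insert_of_notMem ha]
    push_cast
    linarith

variable [Fintype ι]

theorem ent_push_pi_le_sum_edges (hμ : ∀ x, 0 ≤ μ x) (X : ∀ i, Ω → S i) (r : ι) :
    ent (push μ fun x i => X i x) ≤
      ∑ i ∈ univ.erase r, ent (push μ fun x => (X r x, X i x)) -
        ((Fintype.card ι : ℝ) - 2) * ent (push μ (X r)) := by
  have hsplit : ent (push μ fun x i => X i x) =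
      ent (push μ fun x => (X r x, fun i : univ.erase r => X i x)) :=
    ent_push_congr μ fun x y => by
      simp only [Prod.mk.injEq, funext_iff, Subtype.forall, mem_erase, mem_univ, and_true]
      exact ⟨fun h => ⟨h r, fun i _ => h i⟩, fun h i =>
        (eq_or_ne i r).elim (fun hi => hi ▸ h.1) (h.2 i)⟩
  have hcard : (#(univ.erase r) : ℝ) = Fintype.card ι - 1 := by
    rw [cast_card_erase_of_mem (mem_univ r), card_univ]
  have htree := ent_push_prodMk_le_sum hμ (X r) X (univ.erase r)
  rw [hcard] at htree
  linarith

/-- The total correlation of the random variables `X i` under the weights `μ`: how far entropy is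
from being additive on them. -/
noncomputable def totalCorrelation (μ : Ω → ℝ) (X : ∀ i, Ω → S i) : ℝ :=
  ∑ i, ent (push μ (X i)) - ent (push μ fun x i => X i x)

-- `hstar` is the star-edge inequality with `h(X_0, …, X_d)` replaced by its upper bound
-- `h(X_0, …, X_{d-1}) + b`, so the last leaf `X_d` no longer appears.
theorem total_correlation_bound_general (hι : 3 ≤ Fintype.card ι) (hμ : ∀ x, 0 ≤ μ x)
    (X : ∀ i, Ω → S i) (r : ι) {b e : ℝ}
    (hedge : ∀ i ≠ r, ent (push μ fun x => (X r x, X i x)) ≤ e)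
    (hmarg : ∀ i, ent (push μ (X i)) ≤ ent (push μ (X r)))
    (hstar : (Fintype.card ι : ℝ) / 2 * e ≤ ent (push μ fun x i => X i x) + b) :
    totalCorrelation μ X ≤
      b * (2 * (Fintype.card ι : ℝ) - 2) / ((Fintype.card ι : ℝ) - 2) := by
  have htree := ent_push_pi_le_sum_edges hμ X r
  have hedges : ∑ i ∈ univ.erase r, ent (push μ fun x => (X r x, X i x)) ≤
      ((Fintype.card ι : ℝ) - 1) * e :=
    (sum_le_card_nsmul _ _ e fun i hi => hedge i (ne_of_mem_erase hi)).trans_eq (by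
      rw [nsmul_eq_mul, cast_card_erase_of_mem (mem_univ r), card_univ])
  have hmargs : ∑ i, ent (push μ (X i)) ≤ Fintype.card ι * ent (push μ (X r)) := by
    simpa using sum_le_card_nsmul univ _ _ fun i _ => hmarg i
  have hn : (3 : ℝ) ≤ Fintype.card ι := by exact_mod_cast hι
  rw [totalCorrelation]
  set n := (Fintype.card ι : ℝ)
  set h := ent (push μ fun x i => X i x)
  set h₀ := ent (push μ (X r))
  have helim : (n * h₀ - h) * (n - 2) ≤ b * (2 * n - 2) := by
    have hscaled_tree : n * h ≤ n * ((n - 1) * e - (n - 2) * h₀) :=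
      mul_le_mul_of_nonneg_left (by linarith) (by linarith)
    have hscaled_star : (2 * n - 2) * (n / 2 * e) ≤ (2 * n - 2) * (h + b) :=
      mul_le_mul_of_nonneg_left hstar (by linarith)
    linarith
  calc ∑ i, ent (push μ (X i)) - h ≤ n * h₀ - h := by linarith
    _ ≤ b * (2 * n - 2) / (n - 2) := (le_div_iff₀ (by linarith)).mpr helim

end TotalCorrelation

/- **Statement 3**: for an `S`-valued random vector `X = (X_0, …, X_d)` with leaves
exchangeable over the root and identically distributed coordinates, if
`h(X) ≤ h(X_0,…,X_{d-1}) + b` and the star-edge inequality `h(X) ≥ (d/2)·h(X_0,X_1)`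
holds, then the total correlation of `(X_0,…,X_{d-1})` is at most `b·(2d-2)/(d-2)`. -/
theorem total_correlation_bound {S : Type} [Fintype S] (d : ℕ) (hd : 3 ≤ d)
    (μ : (Fin (d + 1) → S) → ℝ) (hμ0 : ∀ x, 0 ≤ μ x) (hμ1 : ∑ x, μ x = 1)
    (b : ℝ) (hb : 0 ≤ b)
    (hexch : ∀ i : Fin d, push μ (fun x => (x 0, x i.succ)) = push μ (fun x => (x 0, x 1)))
    (hmarg : ∀ i : Fin (d + 1), push μ (fun x => x i) = push μ (fun x => x 0))
    (hjoint : ent μ ≤ ent (push μ (fun x => fun i : Fin d => x i.castSucc)) + b)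
    (hstar : ent μ ≥ ((d : ℝ) / 2) * ent (push μ (fun x => (x 0, x 1)))) :
    (∑ i : Fin d, ent (push μ (fun x => x i.castSucc)))
        - ent (push μ (fun x => fun i : Fin d => x i.castSucc))
      ≤ b * (2 * (d : ℝ) - 2) / ((d : ℝ) - 2) := by
  have hedge (k : Fin (d + 1)) (hk : k ≠ 0) :
      ent (push μ fun x => (x 0, x k)) = ent (push μ fun x => (x 0, x 1)) := by
    rw [← Fin.succ_pred k hk, hexch]
  simpa only [totalCorrelation, Fintype.card_fin] using
    total_correlation_bound_general (by simpa using hd) hμ0 (fun (i : Fin d) x => x i.castSucc)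
      ⟨0, by omega⟩ (fun i hi => (hedge i.castSucc (by simpa [Fin.ext_iff] using hi)).le)
      (fun i => by rw [hmarg]; rfl) (by simpa using hstar.le.trans hjoint)
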